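/- The Wasserstein space 𝒲_1(Q) over Q = [−1,1]² with the maximum metric is diagonally rigid: for every isometry Φ : 𝒲_1(Q) → 𝒲_1(Q) there exists an isometry T of (Q, d_m) such that (Φ ∘ T_#)(μ) = μ for every μ ∈ 𝒲_1(Q) whose support is contained in L₊ = {(t,t) : t ∈ [−1,1]} or in L₋ = {(t,−t) : t ∈ [−1,1]}. -/

import Mathlib

open MeasureTheory

/-- The `p`-Wasserstein distance between two measures, defined as the infimum over all
couplings `π` of `μ` and `ν` of `(∬ d(x,y)^p dπ)^(1/p)`. -/
noncomputable def Wdist {X : Type*} [MeasurableSpace X] [PseudoMetricSpace X] (p : ℝ)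
    (μ ν : Measure X) : ℝ :=
  (⨅ π ∈ {π : Measure (X × X) | π.map Prod.fst = μ ∧ π.map Prod.snd = ν},
    (∫⁻ q, edist q.1 q.2 ^ p ∂π) ^ (1 / p)).toReal

/-- The `p`-Wasserstein space over `X`: Borel probability measures on `X` with finite
`p`-th moment. -/
def WSet (X : Type*) [MeasurableSpace X] [PseudoMetricSpace X] (p : ℝ) : Set (Measure X) :=
  {μ | IsProbabilityMeasure μ ∧ ∃ x₀ : X, ∫⁻ x, edist x x₀ ^ p ∂μ < ⊤}

/-- An isometry of the underlying metric space: a distance-preserving bijection. -/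
def IsIsom {X : Type*} [PseudoMetricSpace X] (T : X → X) : Prop :=
  Function.Bijective T ∧ ∀ x y, dist (T x) (T y) = dist x y

/-- An isometry of the `p`-Wasserstein space over `X`: a bijection of the space of
probability measures with finite `p`-th moment preserving the Wasserstein distance. -/
def IsWIsometry (X : Type*) [MeasurableSpace X] [PseudoMetricSpace X] (p : ℝ)
    (Φ : Measure X → Measure X) : Prop :=
  Set.BijOn Φ (WSet X p) (WSet X p) ∧
    ∀ μ ∈ WSet X p, ∀ ν ∈ WSet X p, Wdist p (Φ μ) (Φ ν) = Wdist p μ ν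

/-- The (topological) support of a measure. -/
def msupport {X : Type*} [TopologicalSpace X] [MeasurableSpace X] (μ : Measure X) : Set X :=
  {x | ∀ U : Set X, IsOpen U → x ∈ U → μ U ≠ 0}

def diagLine (ε a : ℝ) : Set (ℝ × ℝ) := {z | z.2 = ε * z.1 + a}

def Lplus : Set (ℝ × ℝ) := {z | z.2 = z.1}

def Lminus : Set (ℝ × ℝ) := {z | z.2 = -z.1}

/-- The closed square `Q = [-1,1]²`. -/
abbrev Qs : Set (ℝ × ℝ) := Set.Icc (-1, -1) (1, 1)

def LplusQ : Set ↥Qs := {q | (q : ℝ × ℝ).2 = (q : ℝ × ℝ).1}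

def LminusQ : Set ↥Qs := {q | (q : ℝ × ℝ).2 = -(q : ℝ × ℝ).1}

/-!
Dirac masses at the four corners of `Q` are, up to order, the only four probability measures at
pairwise distance `2`, the diameter of `𝒲₁(Q)`, so an isometry `Φ` permutes them. Whether two
corners are antipodal can be read off metrically: a measure at distance `2` from two antipodal
corners is concentrated on the other two corners and determined by its distances to the corners,
whereas for two adjacent corners both the midpoint of the opposite side and the half-sum of its
endpoints are at distance `2` and have the same distances to all corners. Hence the permutation
commutes with the antipodal map and is induced by an isometry of `Q`; after composing with the
push-forward of its inverse, `Φ` fixes the corners and all measures on a pair `{a, b}` of antipodal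
corners.

A measure `μ` on the diagonal from `a` to `b` lies metrically between `δ_a` and `δ_b`, and so does
`Φ μ`. Moving the mass of `μ` farther than `s` from `a` to `b` and the rest to `a` gives a measure
`m` on `{a, b}` for which `|dist x a - s|` is a Kantorovich potential between `μ` and `m`; for `Φ μ`
in place of `μ` the same potential still gives a lower bound of the distance. As `Φ` fixes `m`, this
yields `∫ |dist x a - s| ∂μ ≤ ∫ |dist x a - s| ∂Φ μ`, and the reverse by symmetry. These integrals
determine the law of `dist x a`, and therefore the measure.
-/

open Set Filter Topology

section AbsolutePotential

variable {s δ x : ℝ}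

/-- The continuous approximation of the indicator of `Iic s` that decreases linearly from `1` to `0`
on `[s, s + δ]`, written as a combination of functions `|x - t|`. -/
noncomputable def ramp (s δ x : ℝ) : ℝ := (|x - (s + δ)| - |x - s| + δ) / (2 * δ)

lemma ramp_mem_Icc (s : ℝ) (hδ : 0 < δ) (x : ℝ) : ramp s δ x ∈ Icc 0 1 := by
  have hdiff : |(|x - (s + δ)| - |x - s|)| ≤ δ := by
    simpa [abs_of_pos hδ] using abs_abs_sub_abs_le (x - (s + δ)) (x - s)
  rw [abs_le] at hdiff
  exact ⟨div_nonneg (by linarith) (by linarith), (div_le_one (by linarith)).2 (by linarith)⟩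

lemma ramp_of_le (hδ : 0 < δ) (hx : x ≤ s) : ramp s δ x = 1 := by
  rw [ramp, abs_of_nonpos (by linarith), abs_of_nonpos (by linarith),
    div_eq_one_iff_eq (by positivity)]
  ring

lemma ramp_of_ge (hδ : 0 ≤ δ) (hx : s + δ ≤ x) : ramp s δ x = 0 := by
  rw [ramp, abs_of_nonneg (by linarith), abs_of_nonneg (by linarith), div_eq_zero_iff]
  left; ring

lemma tendsto_ramp (s x : ℝ) :
    Tendsto (fun δ => ramp s δ x) (𝓝[>] 0) (𝓝 ((Iic s).indicator 1 x)) := by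
  refine tendsto_const_nhds.congr' ?_
  rcases le_or_gt x s with hx | hx
  · filter_upwards [self_mem_nhdsWithin] with δ hδ
    simp [ramp_of_le hδ hx, hx]
  · filter_upwards [Ioo_mem_nhdsGT (sub_pos.2 hx)] with δ hδ
    simp [ramp_of_ge hδ.1.le (by linarith [hδ.2] : s + δ ≤ x), hx]

lemma tendsto_integral_ramp (μ : Measure ℝ) [IsFiniteMeasure μ] (s : ℝ) :
    Tendsto (fun δ => ∫ x, ramp s δ x ∂μ) (𝓝[>] 0) (𝓝 (μ.real (Iic s))) := by
  rw [← integral_indicator_one measurableSet_Iic]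
  refine tendsto_integral_filter_of_dominated_convergence 1 ?_ ?_ (integrable_const 1)
    (.of_forall fun x => tendsto_ramp s x)
  · exact .of_forall fun δ => by unfold ramp; fun_prop
  · filter_upwards [self_mem_nhdsWithin] with δ hδ
    refine .of_forall fun x => ?_
    obtain ⟨h0, h1⟩ := ramp_mem_Icc s hδ x
    rwa [Real.norm_of_nonneg h0]

lemma integral_ramp {μ : Measure ℝ} [IsProbabilityMeasure μ] (hμ : Integrable id μ) (s δ : ℝ) :
    ∫ x, ramp s δ x ∂μ = (∫ x, |x - (s + δ)| ∂μ - ∫ x, |x - s| ∂μ + δ) / (2 * δ) := by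
  have hint (t : ℝ) : Integrable (fun x => |x - t|) μ := (hμ.sub (integrable_const t)).abs
  have hsub : Integrable (fun x => |x - (s + δ)| - |x - s|) μ := (hint _).sub (hint _)
  simp only [ramp]
  rw [integral_div, integral_add hsub (integrable_const δ), integral_sub (hint _) (hint _)]
  simp

theorem measure_ext_of_integral_abs_sub {μ ν : Measure ℝ} [IsProbabilityMeasure μ]
    [IsProbabilityMeasure ν] (hμ : Integrable id μ) (hν : Integrable id ν)
    (h : ∀ s, ∫ x, |x - s| ∂μ = ∫ x, |x - s| ∂ν) : μ = ν := by
  refine Measure.ext_of_Iic _ _ fun s => ?_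
  rw [← measureReal_eq_measureReal_iff]
  refine tendsto_nhds_unique (tendsto_integral_ramp μ s) ?_
  simpa only [integral_ramp hμ, integral_ramp hν, h] using tendsto_integral_ramp ν s

end AbsolutePotential

section Measures

lemma ae_eq_iff_eq_dirac {X : Type*} [MeasurableSpace X] [MeasurableSingletonClass X]
    {μ : Measure X} [IsProbabilityMeasure μ] {p : X} :
    (∀ᵐ x ∂μ, x = p) ↔ μ = Measure.dirac p := by
  refine ⟨fun h => ?_, fun h => by simp [h, ae_dirac_eq]⟩
  have hmap : μ.map id = μ.map fun _ => p := Measure.map_congr h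
  simpa using hmap

lemma measure_eq_of_map_eq_of_injOn {X Y : Type*} [MeasurableSpace X] [StandardBorelSpace X]
    [MeasurableSpace Y] [MeasurableSpace.CountablySeparated Y] {μ ν : Measure X} {f : X → Y}
    {S : Set X} (hf : Measurable f) (hS : MeasurableSet S) (hinj : InjOn f S)
    (hμ : ∀ᵐ x ∂μ, x ∈ S) (hν : ∀ᵐ x ∂ν, x ∈ S) (h : μ.map f = ν.map f) : μ = ν := by
  refine Measure.ext fun A hA => ?_
  have himage : MeasurableSet (f '' (A ∩ S)) :=
    (hA.inter hS).image_of_measurable_injOn hf (hinj.mono inter_subset_right)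
  have hmeasure {ρ : Measure X} (hρ : ∀ᵐ x ∂ρ, x ∈ S) : ρ A = ρ.map f (f '' (A ∩ S)) := by
    rw [Measure.map_apply hf himage]
    refine measure_congr ?_
    filter_upwards [hρ] with x hx
    refine propext ⟨fun hxA => ⟨x, ⟨hxA, hx⟩, rfl⟩, ?_⟩
    rintro ⟨y, ⟨hyA, hyS⟩, hyx⟩
    exact hinj hyS hx hyx ▸ hyA
  rw [hmeasure hμ, hmeasure hν, h]

lemma ae_mem_msupport {X : Type*} [TopologicalSpace X] [HereditarilyLindelofSpace X]
    [MeasurableSpace X] (μ : Measure X) : ∀ᵐ x ∂μ, x ∈ msupport μ := by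
  filter_upwards [Measure.support_mem_ae (μ := μ)] with x hx U hU hxU
  exact ((Measure.mem_support_iff_forall x).1 hx U (hU.mem_nhds hxU)).ne'

end Measures

section Wasserstein

variable {X : Type*} [MeasurableSpace X]

/-- `π` is a coupling of `μ` and `ν`: its marginals are `μ` and `ν`. -/
def IsCoupling (π : Measure (X × X)) (μ ν : Measure X) : Prop :=
  π.map Prod.fst = μ ∧ π.map Prod.snd = ν

lemma IsCoupling.isProbabilityMeasure {π : Measure (X × X)} {μ ν : Measure X}
    [IsProbabilityMeasure μ] (h : IsCoupling π μ ν) : IsProbabilityMeasure π := by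
  have : IsProbabilityMeasure (π.map Prod.fst) := by rwa [h.1]
  exact Measure.isProbabilityMeasure_of_map Prod.fst

lemma isCoupling_prod (μ ν : Measure X) [IsProbabilityMeasure μ] [IsProbabilityMeasure ν] :
    IsCoupling (μ.prod ν) μ ν := by
  simp [IsCoupling]

lemma isCoupling_graph (μ : Measure X) {g : X → X} (hg : Measurable g) :
    IsCoupling (μ.map fun x => (x, g x)) μ (μ.map g) := by
  constructor
  · rw [Measure.map_map measurable_fst (by fun_prop)]
    exact Measure.map_id
  · rw [Measure.map_map measurable_snd (by fun_prop)]
    rfl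

lemma isCoupling_map_equiv_iff (e : X ≃ᵐ X) {π : Measure (X × X)} {μ ν : Measure X} :
    IsCoupling (π.map (e.prodCongr e)) (μ.map e) (ν.map e) ↔ IsCoupling π μ ν := by
  have hinj := e.map_measurableEquiv_injective
  rw [IsCoupling, Measure.map_map measurable_fst (e.prodCongr e).measurable,
    Measure.map_map measurable_snd (e.prodCongr e).measurable, IsCoupling,
    ← hinj.eq_iff (a := π.map Prod.fst), ← hinj.eq_iff (a := π.map Prod.snd),
    Measure.map_map e.measurable measurable_fst, Measure.map_map e.measurable measurable_snd]
  rfl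

section Isometry

variable [PseudoMetricSpace X] [BorelSpace X] {p : ℝ}

lemma Wdist_map_isometryEquiv (e : X ≃ᵢ X) (μ ν : Measure X) :
    Wdist p (μ.map e) (ν.map e) = Wdist p μ ν := by
  let E : X ≃ᵐ X := e.toHomeomorph.toMeasurableEquiv
  have hsurj : Function.Surjective (Measure.map (E.prodCongr E)) := fun π =>
    ⟨π.map (E.prodCongr E).symm, (E.prodCongr E).map_map_symm⟩
  unfold Wdist
  congr 1
  refine (hsurj.iInf_congr _ fun π => iInf_congr_Prop (isCoupling_map_equiv_iff E) fun _ => ?_).symm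
  rw [lintegral_map_equiv]
  simp [E, MeasurableEquiv.prodCongr, e.edist_eq]

lemma map_isometryEquiv_mem_WSet (e : X ≃ᵢ X) {μ : Measure X} (hμ : μ ∈ WSet X p) :
    μ.map e ∈ WSet X p := by
  obtain ⟨hprob, x₀, hx₀⟩ := hμ
  let E : X ≃ᵐ X := e.toHomeomorph.toMeasurableEquiv
  refine ⟨Measure.isProbabilityMeasure_map e.continuous.measurable.aemeasurable, e x₀, ?_⟩
  change ∫⁻ x, edist x (e x₀) ^ p ∂μ.map E < ⊤
  rw [lintegral_map_equiv]
  simpa [E, e.edist_eq] using hx₀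

lemma isWIsometry_map (p : ℝ) (e : X ≃ᵢ X) : IsWIsometry X p fun μ => μ.map e := by
  let E : X ≃ᵐ X := e.toHomeomorph.toMeasurableEquiv
  refine ⟨⟨fun μ => map_isometryEquiv_mem_WSet e, E.map_measurableEquiv_injective.injOn,
    fun μ hμ => ⟨μ.map e.symm, map_isometryEquiv_mem_WSet e.symm hμ, E.map_map_symm⟩⟩,
    fun μ _ ν _ => Wdist_map_isometryEquiv e μ ν⟩

end Isometry

lemma IsWIsometry.comp [PseudoMetricSpace X] {p : ℝ} {Φ Ψ : Measure X → Measure X}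
    (hΦ : IsWIsometry X p Φ) (hΨ : IsWIsometry X p Ψ) : IsWIsometry X p (Φ ∘ Ψ) :=
  ⟨hΦ.1.comp hΨ.1, fun μ hμ ν hν =>
    (hΦ.2 _ (hΨ.1.mapsTo hμ) _ (hΨ.1.mapsTo hν)).trans (hΨ.2 μ hμ ν hν)⟩

lemma mem_WSet_one_iff [PseudoMetricSpace X] [BoundedSpace X] {μ : Measure X} :
    μ ∈ WSet X 1 ↔ IsProbabilityMeasure μ := by
  refine ⟨fun h => h.1, fun h => ?_⟩
  obtain ⟨x₀⟩ := Measure.nonempty_of_neZero μ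
  refine ⟨h, x₀, ?_⟩
  calc ∫⁻ x, edist x x₀ ^ (1 : ℝ) ∂μ ≤ ∫⁻ _, Metric.ediam (univ : Set X) ∂μ := by
        refine lintegral_mono fun x => ?_
        rw [ENNReal.rpow_one]
        exact Metric.edist_le_ediam_of_mem (mem_univ x) (mem_univ x₀)
    _ < ⊤ := by simpa using BoundedSpace.bounded_univ.ediam_ne_top.lt_top

lemma integrable_of_continuous [TopologicalSpace X] [CompactSpace X] [OpensMeasurableSpace X]
    {E : Type*} [NormedAddCommGroup E] {μ : Measure X} [IsFiniteMeasureOnCompacts μ] {f : X → E}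
    (hf : Continuous f) : Integrable f μ :=
  hf.integrable_of_hasCompactSupport (HasCompactSupport.of_compactSpace f)

section CompactSpace

variable [PseudoMetricSpace X] [CompactSpace X] [BorelSpace X] {μ ν : Measure X}
  [IsProbabilityMeasure μ] {D : ℝ}

lemma lintegral_edist_eq_ofReal_integral_dist (π : Measure (X × X)) [IsFiniteMeasure π] :
    ∫⁻ q, edist q.1 q.2 ∂π = ENNReal.ofReal (∫ q, dist q.1 q.2 ∂π) := by
  rw [ofReal_integral_eq_lintegral_ofReal (integrable_of_continuous (by fun_prop))
    (.of_forall fun _ => dist_nonneg)]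
  simp only [edist_dist]

lemma IsCoupling.Wdist_one_le_integral {π : Measure (X × X)} (h : IsCoupling π μ ν) :
    Wdist 1 μ ν ≤ ∫ q, dist q.1 q.2 ∂π := by
  have := h.isProbabilityMeasure
  refine ENNReal.toReal_le_of_le_ofReal (integral_nonneg fun _ => dist_nonneg) ?_
  refine (iInf₂_le π h).trans_eq ?_
  simp only [ENNReal.rpow_one, one_div_one, lintegral_edist_eq_ofReal_integral_dist]

variable [IsProbabilityMeasure ν]

lemma le_Wdist_one {c : ℝ} (h : ∀ π, IsCoupling π μ ν → c ≤ ∫ q, dist q.1 q.2 ∂π) :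
    c ≤ Wdist 1 μ ν := by
  have hcost {π : Measure (X × X)} (hπ : IsCoupling π μ ν) :
      (∫⁻ q, edist q.1 q.2 ^ (1 : ℝ) ∂π) ^ (1 / 1 : ℝ)
        = ENNReal.ofReal (∫ q, dist q.1 q.2 ∂π) := by
    have := hπ.isProbabilityMeasure
    simp only [ENNReal.rpow_one, one_div_one, lintegral_edist_eq_ofReal_integral_dist]
  rw [Wdist, ← ENNReal.ofReal_le_iff_le_toReal]
  · refine le_iInf₂ fun π hπ => ?_
    rw [hcost hπ]
    exact ENNReal.ofReal_le_ofReal (h π hπ)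
  · refine ne_top_of_le_ne_top ?_ (iInf₂_le (μ.prod ν) (isCoupling_prod μ ν))
    rw [hcost (isCoupling_prod μ ν)]
    exact ENNReal.ofReal_ne_top

lemma integral_sub_integral_le_Wdist_one {f : X → ℝ} (hf : LipschitzWith 1 f) :
    ∫ x, f x ∂μ - ∫ x, f x ∂ν ≤ Wdist 1 μ ν := by
  refine le_Wdist_one fun π hπ => ?_
  have := hπ.isProbabilityMeasure
  have hcont := hf.continuous
  have hint {g : X × X → ℝ} (hg : Continuous g) : Integrable g π := integrable_of_continuous hg
  rw [← hπ.1, ← hπ.2, integral_map (by fun_prop) hcont.aestronglyMeasurable,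
    integral_map (by fun_prop) hcont.aestronglyMeasurable,
    ← integral_sub (hint (by fun_prop)) (hint (by fun_prop))]
  refine integral_mono (hint (by fun_prop)) (hint (by fun_prop)) fun q => ?_
  simpa using (le_abs_self _).trans (hf.dist_le_mul q.1 q.2)

lemma Wdist_one_map_le {g : X → X} (hg : Measurable g) :
    Wdist 1 μ (μ.map g) ≤ ∫ x, dist x (g x) ∂μ := by
  have := Measure.isProbabilityMeasure_map (μ := μ) hg.aemeasurable
  refine (isCoupling_graph μ hg).Wdist_one_le_integral.trans_eq ?_
  rw [integral_map (by fun_prop) (by fun_prop)]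

lemma Wdist_one_dirac (y : X) : Wdist 1 μ (Measure.dirac y) = ∫ x, dist x y ∂μ := by
  refine le_antisymm ?_ ?_
  · simpa using Wdist_one_map_le (μ := μ) (measurable_const (a := y))
  · have hzero : ∫ x, dist x y ∂Measure.dirac y = 0 := by
      rw [integral_dirac' _ _ (by fun_prop : Continuous (dist · y)).stronglyMeasurable, dist_self]
    simpa [hzero] using
      integral_sub_integral_le_Wdist_one (μ := μ) (ν := .dirac y) (LipschitzWith.dist_left y)

lemma Wdist_one_dirac_dirac (x y : X) :
    Wdist 1 (Measure.dirac x) (Measure.dirac y) = dist x y := by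
  rw [Wdist_one_dirac,
    integral_dirac' _ _ (by fun_prop : Continuous (dist · y)).stronglyMeasurable]

lemma Wdist_one_dirac_eq_iff {y : X} (hD : ∀ x, dist x y ≤ D) :
    Wdist 1 μ (Measure.dirac y) = D ↔ ∀ᵐ x ∂μ, dist x y = D := by
  have hiff := integral_eq_iff_of_ae_le (μ := μ) (integrable_of_continuous (by fun_prop))
    (integrable_const D) (.of_forall hD)
  rwa [integral_const, probReal_univ, one_smul, ← Wdist_one_dirac] at hiff

lemma dist_eq_of_Wdist_one_eq_of_mem_support (hD : ∀ x y : X, dist x y ≤ D)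
    (h : Wdist 1 μ ν = D) {x y : X} (hx : x ∈ μ.support) (hy : y ∈ ν.support) : dist x y = D := by
  have hcost : ∫ q, dist q.1 q.2 ∂μ.prod ν = ∫ _, D ∂μ.prod ν := by
    refine le_antisymm (integral_mono (integrable_of_continuous (by fun_prop))
      (integrable_const D) fun q => hD q.1 q.2) ?_
    simpa [h] using (isCoupling_prod μ ν).Wdist_one_le_integral
  have hae : ∀ᵐ x ∂μ, ∀ᵐ y ∂ν, dist x y = D :=
    Measure.ae_ae_of_ae_prod <| (integral_eq_iff_of_ae_le
      (integrable_of_continuous (by fun_prop)) (integrable_const D)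
      (.of_forall fun q => hD q.1 q.2)).1 hcost
  have hsupport : μ.support ⊆ {x | ∀ y ∈ ν.support, dist x y = D} := by
    refine Measure.support_subset_of_isClosed ?_ ?_
    · simp only [ofPred_forall]
      exact isClosed_biInter fun y _ => isClosed_eq (by fun_prop) continuous_const
    · filter_upwards [hae] with x hx
      exact fun y hy => Measure.support_subset_of_isClosed
        (isClosed_eq (by fun_prop) continuous_const) hx hy
  exact hsupport hx y hy

end CompactSpace

end Wasserstein

section MetricSegment

/-- The metric segment between `a` and `b`: the points at which the triangle inequality
`dist a b ≤ dist x a + dist x b` is an equality. -/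
def metricSegment {X : Type*} [PseudoMetricSpace X] (a b : X) : Set X :=
  {x | dist x a + dist x b = dist a b}

/-- The endpoint map of `metricSegment a b` at level `s`: points farther than `s` from `a` go to
`b`, the others to `a`. Pushing a measure on the segment forward by it produces a measure on
`{a, b}` whose distances detect the integral of `|dist x a - s|`. -/
noncomputable def endpointMap {X : Type*} [PseudoMetricSpace X] (a b : X) (s : ℝ) (x : X) : X :=
  open scoped Classical in if s < dist x a then b else a

section PseudoMetricSpace

variable {X : Type*} [PseudoMetricSpace X] {a b : X}

lemma dist_le_dist_add_dist_left (a b x : X) : dist a b ≤ dist x a + dist x b := by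
  simpa [dist_comm x a] using dist_triangle a x b

lemma endpointMap_eq_or_eq (a b : X) (s : ℝ) (x : X) :
    endpointMap a b s x = a ∨ endpointMap a b s x = b := by
  unfold endpointMap
  split_ifs <;> simp

lemma isClosed_metricSegment (a b : X) : IsClosed (metricSegment a b) :=
  isClosed_eq (by fun_prop) continuous_const

lemma dist_endpointMap_of_mem {s : ℝ} {x : X} (hx : x ∈ metricSegment a b) :
    dist x (endpointMap a b s x) = |dist (endpointMap a b s x) a - s| - |dist x a - s| := by
  have hsum : dist x a + dist x b = dist a b := hx
  have hb := dist_nonneg (x := x) (y := b)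
  have ha := dist_nonneg (x := x) (y := a)
  unfold endpointMap
  split_ifs with h
  · rw [dist_comm b a, abs_of_pos (by linarith), abs_of_pos (by linarith)]
    linarith
  · rw [dist_self, abs_of_nonpos (a := dist x a - s) (by linarith),
      abs_of_nonpos (by linarith)]
    linarith

lemma lipschitzWith_abs_dist_sub (a : X) (s : ℝ) : LipschitzWith 1 fun x => |dist x a - s| := by
  refine LipschitzWith.of_dist_le_mul fun x y => ?_
  rw [NNReal.coe_one, one_mul, Real.dist_eq]
  refine (abs_abs_sub_abs_le _ _).trans ?_
  simpa using abs_dist_sub_le x y a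

variable [MeasurableSpace X] [BorelSpace X]

lemma measurable_endpointMap (a b : X) (s : ℝ) : Measurable (endpointMap a b s) :=
  Measurable.ite (isOpen_lt continuous_const (by fun_prop)).measurableSet measurable_const
    measurable_const

lemma ae_map_endpointMap [MeasurableSingletonClass X] (s : ℝ) (ρ : Measure X) :
    ∀ᵐ x ∂ρ.map (endpointMap a b s), x = a ∨ x = b :=
  (ae_map_iff (measurable_endpointMap a b s).aemeasurable
    ((measurableSet_singleton b).insert a)).2 (.of_forall (endpointMap_eq_or_eq a b s))

variable [CompactSpace X] {μ ν : Measure X} [IsProbabilityMeasure μ] [IsProbabilityMeasure ν]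

lemma ae_mem_metricSegment_iff :
    (∀ᵐ x ∂μ, x ∈ metricSegment a b) ↔
      Wdist 1 μ (Measure.dirac a) + Wdist 1 μ (Measure.dirac b) = dist a b := by
  have hiff := integral_eq_iff_of_ae_le (μ := μ) (integrable_const (dist a b))
    (integrable_of_continuous (by fun_prop)) (.of_forall (dist_le_dist_add_dist_left a b))
  rw [integral_const, probReal_univ, one_smul, integral_add
    (integrable_of_continuous (by fun_prop)) (integrable_of_continuous (by fun_prop)),
    ← Wdist_one_dirac, ← Wdist_one_dirac, eq_comm] at hiff
  exact (hiff.trans eventuallyEq_comm).symm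

lemma integral_abs_dist_sub_le_of_Wdist_map_endpointMap_le (s : ℝ)
    (hμ : ∀ᵐ x ∂μ, x ∈ metricSegment a b)
    (h : Wdist 1 ν (μ.map (endpointMap a b s)) ≤ Wdist 1 μ (μ.map (endpointMap a b s))) :
    ∫ x, |dist x a - s| ∂μ ≤ ∫ x, |dist x a - s| ∂ν := by
  have hG := measurable_endpointMap a b s
  have := Measure.isProbabilityMeasure_map (μ := μ) hG.aemeasurable
  have hcont := (lipschitzWith_abs_dist_sub a s).continuous
  have hintegrable : Integrable (fun x => |dist (endpointMap a b s x) a - s|) μ :=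
    (integrable_of_continuous (μ := μ.map (endpointMap a b s)) hcont).comp_measurable hG
  have hupper : Wdist 1 μ (μ.map (endpointMap a b s))
      ≤ ∫ x, |dist x a - s| ∂μ.map (endpointMap a b s) - ∫ x, |dist x a - s| ∂μ := by
    refine (Wdist_one_map_le hG).trans_eq ?_
    rw [integral_map hG.aemeasurable hcont.aestronglyMeasurable,
      ← integral_sub hintegrable (integrable_of_continuous hcont)]
    exact integral_congr_ae (hμ.mono fun x hx => dist_endpointMap_of_mem hx)
  have hlower := integral_sub_integral_le_Wdist_one (μ := ν) (ν := μ.map (endpointMap a b s))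
    (lipschitzWith_abs_dist_sub a s).neg
  simp only [Pi.neg_apply, integral_neg] at hlower
  linarith

end PseudoMetricSpace

variable {X : Type*} [MetricSpace X] [CompactSpace X] [MeasurableSpace X] [BorelSpace X] {a b : X}
  {μ ν : Measure X} [IsProbabilityMeasure μ] [IsProbabilityMeasure ν]

theorem eq_of_Wdist_eq_of_ae_mem_metricSegment (hinj : InjOn (dist · a) (metricSegment a b))
    (hμ : ∀ᵐ x ∂μ, x ∈ metricSegment a b)
    (h : ∀ m : Measure X, IsProbabilityMeasure m → (∀ᵐ x ∂m, x = a ∨ x = b) →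
      Wdist 1 ν m = Wdist 1 μ m) : ν = μ := by
  have hν : ∀ᵐ x ∂ν, x ∈ metricSegment a b := by
    rw [ae_mem_metricSegment_iff, h _ inferInstance (by simp [ae_dirac_eq]),
      h _ inferInstance (by simp [ae_dirac_eq]), ← ae_mem_metricSegment_iff]
    exact hμ
  have hdist : Measurable (dist · a : X → ℝ) := by fun_prop
  have hendpoint (ρ : Measure X) [IsProbabilityMeasure ρ] (s : ℝ) :
      Wdist 1 ν (ρ.map (endpointMap a b s)) = Wdist 1 μ (ρ.map (endpointMap a b s)) :=
    h _ (Measure.isProbabilityMeasure_map (measurable_endpointMap a b s).aemeasurable)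
      (ae_map_endpointMap s ρ)
  have hmap : ν.map (dist · a) = μ.map (dist · a) := by
    have hprob (ρ : Measure X) [IsProbabilityMeasure ρ] :=
      Measure.isProbabilityMeasure_map (μ := ρ) hdist.aemeasurable
    have hintegrable (ρ : Measure X) [IsProbabilityMeasure ρ] :
        Integrable id (ρ.map (dist · a)) :=
      (integrable_map_measure (by fun_prop) hdist.aemeasurable).2
        (integrable_of_continuous (by fun_prop))
    have := hprob μ
    have := hprob ν
    refine measure_ext_of_integral_abs_sub (hintegrable ν) (hintegrable μ) fun s => ?_
    rw [integral_map hdist.aemeasurable (by fun_prop),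
      integral_map hdist.aemeasurable (by fun_prop)]
    exact le_antisymm
      (integral_abs_dist_sub_le_of_Wdist_map_endpointMap_le s hν (hendpoint ν s).ge)
      (integral_abs_dist_sub_le_of_Wdist_map_endpointMap_le s hμ (hendpoint μ s).le)
  exact measure_eq_of_map_eq_of_injOn hdist (isClosed_metricSegment a b).measurableSet hinj hν hμ
    hmap

end MetricSegment

section TwoPoints

variable {X : Type*} [MetricSpace X] [CompactSpace X] [MeasurableSpace X] [BorelSpace X] {a b : X}
  {μ ν : Measure X} [IsProbabilityMeasure μ] [IsProbabilityMeasure ν]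

lemma Wdist_one_dirac_of_ae_eq_or_eq (hab : a ≠ b) (hμ : ∀ᵐ x ∂μ, x = a ∨ x = b) :
    Wdist 1 μ (Measure.dirac a) = μ.real {b} * dist b a := by
  have hdist : ∀ᵐ x ∂μ, dist x a = indicator {b} (fun _ => dist b a) x := by
    filter_upwards [hμ] with x hx
    rcases hx with rfl | rfl <;> simp [hab]
  rw [Wdist_one_dirac, integral_congr_ae hdist,
    integral_indicator_const _ (measurableSet_singleton b), smul_eq_mul]

lemma eq_of_Wdist_dirac_eq_of_ae_eq_or_eq (hab : a ≠ b) (hμ : ∀ᵐ x ∂μ, x = a ∨ x = b)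
    (hν : ∀ᵐ x ∂ν, x = a ∨ x = b)
    (h : Wdist 1 ν (Measure.dirac a) = Wdist 1 μ (Measure.dirac a)) : ν = μ := by
  rw [Wdist_one_dirac_of_ae_eq_or_eq hab hμ, Wdist_one_dirac_of_ae_eq_or_eq hab hν] at h
  have hb : ν {b} = μ {b} :=
    (measureReal_eq_measureReal_iff).1 (mul_right_cancel₀ (dist_ne_zero.2 hab.symm) h)
  have ha {ρ : Measure X} [IsProbabilityMeasure ρ] (hρ : ∀ᵐ x ∂ρ, x = a ∨ x = b) :
      ρ {a} = 1 - ρ {b} := by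
    rw [← prob_compl_eq_one_sub (measurableSet_singleton b)]
    refine measure_congr ?_
    filter_upwards [hρ] with x hx
    refine propext ?_
    change x = a ↔ x ≠ b
    rcases hx with rfl | rfl <;> simp [hab, hab.symm]
  have hνμ : ν {a} = μ {a} := by rw [ha hν, ha hμ, hb]
  rw [Measure.ae_eq_or_eq_iff_eq_dirac_add_dirac hab] at hμ hν
  rw [hμ, hν, hνμ, hb]

end TwoPoints

section PairMean

variable {X : Type*} [MeasurableSpace X]

/-- The probability measure giving mass `1 / 2` to each of `x` and `y`. -/
noncomputable def pairMean (x y : X) : Measure X :=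
  (2⁻¹ : ENNReal) • (Measure.dirac x + Measure.dirac y)

instance (x y : X) : IsProbabilityMeasure (pairMean x y) :=
  ⟨by simp [pairMean, ENNReal.inv_two_add_inv_two]⟩

lemma Wdist_one_pairMean_dirac [PseudoMetricSpace X] [CompactSpace X] [BorelSpace X] (x y z : X) :
    Wdist 1 (pairMean x y) (Measure.dirac z) = (dist x z + dist y z) / 2 := by
  have hcont : Continuous (dist · z) := by fun_prop
  rw [Wdist_one_dirac, pairMean, integral_smul_measure,
    integral_add_measure (integrable_of_continuous hcont) (integrable_of_continuous hcont),
    integral_dirac' _ _ hcont.stronglyMeasurable, integral_dirac' _ _ hcont.stronglyMeasurable]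
  simp [div_eq_inv_mul]

end PairMean

section Square

lemma mem_Qs_iff {x : ℝ × ℝ} : x ∈ Qs ↔ |x.1| ≤ 1 ∧ |x.2| ≤ 1 := by
  simp only [mem_Icc, Prod.le_def, abs_le]
  tauto

lemma Qs.abs_fst_le_one (x : Qs) : |x.1.1| ≤ 1 := (mem_Qs_iff.1 x.2).1

lemma Qs.abs_snd_le_one (x : Qs) : |x.1.2| ≤ 1 := (mem_Qs_iff.1 x.2).2

lemma Qs.dist_le_two (x y : Qs) : dist x y ≤ 2 := by
  rw [Subtype.dist_eq, Prod.dist_eq, Real.dist_eq, Real.dist_eq]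
  refine max_le ?_ ?_
  · linarith [abs_sub x.1.1 y.1.1, Qs.abs_fst_le_one x, Qs.abs_fst_le_one y]
  · linarith [abs_sub x.1.2 y.1.2, Qs.abs_snd_le_one x, Qs.abs_snd_le_one y]

lemma abs_sub_unit {x : ℝ} (hx : |x| ≤ 1) (u : ℤˣ) : |x - (u : ℤ)| = 1 - (u : ℤ) * x := by
  rw [abs_le] at hx
  rcases Int.units_eq_one_or u with rfl | rfl
  · simp [abs_of_nonpos (by linarith : x - 1 ≤ 0)]
  · simp [abs_of_nonneg (by linarith : 0 ≤ x + 1), add_comm]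

lemma one_sub_unit_mul_eq_two_iff {x : ℝ} (u : ℤˣ) : 1 - (u : ℤ) * x = 2 ↔ x = -(u : ℤ) := by
  rcases Int.units_eq_one_or u with rfl | rfl <;>
    constructor <;> intro h <;> norm_num at h ⊢ <;> linarith

lemma abs_cast_unit (u : ℤˣ) : |((u : ℤ) : ℝ)| = 1 := by
  rcases Int.units_eq_one_or u with rfl | rfl <;> simp

lemma signs_neg_ne_self (s : ℤˣ × ℤˣ) : -s ≠ s :=
  fun h => neg_units_ne_self s.1 (congrArg Prod.fst h)

/-- The corner of the square `Q` with the signs `s` as coordinates. -/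
def corner (s : ℤˣ × ℤˣ) : Qs :=
  ⟨((s.1 : ℤ), (s.2 : ℤ)), mem_Qs_iff.2 ⟨(abs_cast_unit s.1).le, (abs_cast_unit s.2).le⟩⟩

lemma corner_fst (s : ℤˣ × ℤˣ) : (corner s).1.1 = (s.1 : ℤ) := rfl

lemma corner_snd (s : ℤˣ × ℤˣ) : (corner s).1.2 = (s.2 : ℤ) := rfl

lemma eq_corner_iff {x : Qs} {s : ℤˣ × ℤˣ} :
    x = corner s ↔ x.1.1 = (s.1 : ℤ) ∧ x.1.2 = (s.2 : ℤ) := by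
  rw [Subtype.ext_iff, Prod.ext_iff]
  rfl

lemma corner_injective : Function.Injective corner := fun s t h => by
  obtain ⟨h1, h2⟩ := eq_corner_iff.1 h
  exact Prod.ext (Units.ext (Int.cast_injective h1)) (Units.ext (Int.cast_injective h2))

lemma dist_corner (x : Qs) (s : ℤˣ × ℤˣ) :
    dist x (corner s) = max (1 - (s.1 : ℤ) * x.1.1) (1 - (s.2 : ℤ) * x.1.2) := by
  rw [← abs_sub_unit (Qs.abs_fst_le_one x), ← abs_sub_unit (Qs.abs_snd_le_one x)]
  rfl

lemma dist_corner_eq_two_iff {x : Qs} {s : ℤˣ × ℤˣ} :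
    dist x (corner s) = 2 ↔ x.1.1 = -(s.1 : ℤ) ∨ x.1.2 = -(s.2 : ℤ) := by
  have hle := Qs.dist_le_two x (corner s)
  rw [dist_corner] at hle ⊢
  rw [← one_sub_unit_mul_eq_two_iff, ← one_sub_unit_mul_eq_two_iff]
  refine ⟨fun h => ?_, fun h => le_antisymm hle ?_⟩
  · rcases max_choice (1 - (s.1 : ℤ) * x.1.1) (1 - (s.2 : ℤ) * x.1.2) with hmax | hmax
    · exact .inl (hmax.symm.trans h)
    · exact .inr (hmax.symm.trans h)
  · rcases h with h | h
    · exact h.ge.trans (le_max_left _ _)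
    · exact h.ge.trans (le_max_right _ _)

lemma dist_corner_corner_of_ne {s t : ℤˣ × ℤˣ} (hst : s ≠ t) :
    dist (corner s) (corner t) = 2 := by
  rw [dist_corner_eq_two_iff]
  by_cases h : s.1 = t.1
  · have hsnd : s.2 ≠ t.2 := fun h' => hst (Prod.ext h h')
    exact .inr (by simp [corner, Int.units_ne_iff_eq_neg.1 hsnd])
  · exact .inl (by simp [corner, Int.units_ne_iff_eq_neg.1 h])

lemma cast_unit_ne_neg_self (u : ℤˣ) : ((u : ℤ) : ℝ) ≠ -(u : ℤ) := by
  rcases Int.units_eq_one_or u with rfl | rfl <;> norm_num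

lemma mem_metricSegment_corner_neg_iff {x : Qs} {s : ℤˣ × ℤˣ} :
    x ∈ metricSegment (corner s) (corner (-s)) ↔ (s.1 : ℤ) * x.1.1 = (s.2 : ℤ) * x.1.2 := by
  have hdist : dist (corner s) (corner (-s)) = 2 :=
    dist_corner_eq_two_iff.2 (by simp [corner])
  have hsum : dist x (corner s) + dist x (corner (-s))
      = 2 + |(s.1 : ℤ) * x.1.1 - (s.2 : ℤ) * x.1.2| := by
    simp only [dist_corner, Prod.fst_neg, Prod.snd_neg, Units.val_neg, Int.cast_neg]
    rcases le_total ((s.1 : ℤ) * x.1.1) ((s.2 : ℤ) * x.1.2) with h | h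
    · rw [max_eq_left (by linarith), max_eq_right (by linarith), abs_of_nonpos (by linarith)]
      ring
    · rw [max_eq_right (by linarith), max_eq_left (by linarith), abs_of_nonneg (by linarith)]
      ring
  rw [metricSegment, mem_ofPred_eq, hdist, hsum, add_eq_left, abs_eq_zero, sub_eq_zero]

lemma injOn_dist_corner (s : ℤˣ × ℤˣ) :
    InjOn (dist · (corner s)) (metricSegment (corner s) (corner (-s))) := by
  intro x hx y hy h
  rw [mem_metricSegment_corner_neg_iff] at hx hy
  simp only [dist_corner, hx, hy, max_self, sub_right_inj] at h
  have hcancel (u : ℤˣ) {a b : ℝ} (hab : (u : ℤ) * a = (u : ℤ) * b) : a = b :=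
    mul_left_cancel₀ (by exact_mod_cast u.ne_zero) hab
  exact Subtype.ext (Prod.ext (hcancel s.1 (by rw [hx, hy, h])) (hcancel s.2 h))

section MaximalDistance

/-- A sign of the real number `x`, with the convention that the sign of `0` is `1`. -/
noncomputable def signUnit (x : ℝ) : ℤˣ := if 0 ≤ x then 1 else -1

/-- The signs of the coordinates of a point of `Q`. -/
noncomputable def orthant (x : Qs) : ℤˣ × ℤˣ := (signUnit x.1.1, signUnit x.1.2)

lemma signUnit_of_abs_sub_eq_two {x y : ℝ} (hx : |x| ≤ 1) (hy : |y| ≤ 1) (h : |x - y| = 2) :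
    x = (signUnit x : ℤ) ∧ signUnit y = -signUnit x := by
  rw [abs_le] at hx hy
  rcases (abs_eq two_pos.le).1 h with h | h
  · obtain rfl : x = 1 := by linarith
    obtain rfl : y = -1 := by linarith
    norm_num [signUnit]
  · obtain rfl : x = -1 := by linarith
    obtain rfl : y = 1 := by linarith
    norm_num [signUnit]

lemma orthant_of_dist_eq_two {x y : Qs} (h : dist x y = 2) :
    (x.1.1 = ((orthant x).1 : ℤ) ∧ (orthant y).1 = -(orthant x).1) ∨
      (x.1.2 = ((orthant x).2 : ℤ) ∧ (orthant y).2 = -(orthant x).2) := by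
  rw [Subtype.dist_eq, Prod.dist_eq, Real.dist_eq, Real.dist_eq] at h
  rcases max_choice |x.1.1 - y.1.1| |x.1.2 - y.1.2| with hmax | hmax
  · exact .inl (signUnit_of_abs_sub_eq_two (Qs.abs_fst_le_one x) (Qs.abs_fst_le_one y)
      (hmax.symm.trans h))
  · exact .inr (signUnit_of_abs_sub_eq_two (Qs.abs_snd_le_one x) (Qs.abs_snd_le_one y)
      (hmax.symm.trans h))

lemma exists_perm_eq_corner {x : ℤˣ × ℤˣ → Qs} (hx : Pairwise fun i j => dist (x i) (x j) = 2) :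
    ∃ σ : Equiv.Perm (ℤˣ × ℤˣ), ∀ i, x i = corner (σ i) := by
  have hinj : Function.Injective (orthant ∘ x) := fun i j hij => by
    by_contra hne
    rcases orthant_of_dist_eq_two (hx hne) with ⟨-, h⟩ | ⟨-, h⟩
    · exact units_ne_neg_self _ (by rw [← h]; exact congrArg Prod.fst hij)
    · exact units_ne_neg_self _ (by rw [← h]; exact congrArg Prod.snd hij)
  let σ := Equiv.ofBijective _ (Finite.injective_iff_bijective.1 hinj)
  refine ⟨σ, fun i => eq_corner_iff.2 ?_⟩
  have hσ (j) : orthant (x j) = σ j := rfl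
  have hneighbour (t) (ht : t ≠ σ i) : dist (x i) (x (σ.symm t)) = 2 :=
    hx fun h => ht (by rw [h, σ.apply_symm_apply])
  constructor
  · rcases orthant_of_dist_eq_two (hneighbour (-(σ i).1, (σ i).2)
      (by simp [Prod.ext_iff])) with h | h
    · exact h.1
    · simp [hσ] at h
  · rcases orthant_of_dist_eq_two (hneighbour ((σ i).1, -(σ i).2)
      (by simp [Prod.ext_iff])) with h | h
    · simp [hσ] at h
    · exact h.1

lemma eq_corner_of_dist_eq_two {x : Qs} {s : ℤˣ × ℤˣ}
    (h : ∀ t, t ≠ s → dist x (corner t) = 2) : x = corner s := by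
  have hfst := dist_corner_eq_two_iff.1 (h (-s.1, s.2) (by simp [Prod.ext_iff]))
  have hsnd := dist_corner_eq_two_iff.1 (h (s.1, -s.2) (by simp [Prod.ext_iff]))
  have hboth := dist_corner_eq_two_iff.1 (h (-s) (by simp [Prod.ext_iff]))
  simp only [Prod.fst_neg, Prod.snd_neg, Units.val_neg, Int.cast_neg, neg_neg] at hfst hsnd hboth
  have hne1 := cast_unit_ne_neg_self s.1
  have hne2 := cast_unit_ne_neg_self s.2
  rw [eq_corner_iff]
  grind

lemma dist_corner_eq_two_and_dist_corner_neg_eq_two_iff {x : Qs} {s : ℤˣ × ℤˣ} :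
    dist x (corner s) = 2 ∧ dist x (corner (-s)) = 2 ↔
      x = corner (s.1, -s.2) ∨ x = corner (-(s.1, -s.2)) := by
  have hne1 := cast_unit_ne_neg_self s.1
  have hne2 := cast_unit_ne_neg_self s.2
  simp only [dist_corner_eq_two_iff, eq_corner_iff, Prod.fst_neg, Prod.snd_neg, Units.val_neg,
    Int.cast_neg, neg_neg]
  grind

theorem exists_perm_eq_dirac_corner {μ : ℤˣ × ℤˣ → Measure Qs}
    (hprob : ∀ i, IsProbabilityMeasure (μ i))
    (hμ : Pairwise fun i j => Wdist 1 (μ i) (μ j) = 2) :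
    ∃ σ : Equiv.Perm (ℤˣ × ℤˣ), ∀ i, μ i = Measure.dirac (corner (σ i)) := by
  have hdist {i j} (hij : i ≠ j) {x y} (hx : x ∈ (μ i).support) (hy : y ∈ (μ j).support) :
      dist x y = 2 :=
    dist_eq_of_Wdist_one_eq_of_mem_support Qs.dist_le_two (hμ hij) hx hy
  have hsupport (i) : (μ i).support.Nonempty := Measure.nonempty_support (NeZero.ne (μ i))
  choose x hx using hsupport
  obtain ⟨σ, hσ⟩ := exists_perm_eq_corner fun i j hij => hdist hij (hx i) (hx j)
  refine ⟨σ, fun i => ae_eq_iff_eq_dirac.1 ?_⟩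
  filter_upwards [Measure.support_mem_ae (μ := μ i)] with y hy
  refine eq_corner_of_dist_eq_two fun t ht => ?_
  rw [← σ.apply_symm_apply t, ← hσ]
  refine hdist (fun h => ht ?_) hy (hx _)
  rw [h, σ.apply_symm_apply]

end MaximalDistance

section CornerDistances

variable {μ ν : Measure Qs} [IsProbabilityMeasure μ] [IsProbabilityMeasure ν]

lemma Wdist_corner_eq_two_iff_ae_eq_or_eq {s : ℤˣ × ℤˣ} :
    Wdist 1 μ (Measure.dirac (corner s)) = 2 ∧ Wdist 1 μ (Measure.dirac (corner (-s))) = 2 ↔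
      ∀ᵐ x ∂μ, x = corner (s.1, -s.2) ∨ x = corner (-(s.1, -s.2)) := by
  rw [Wdist_one_dirac_eq_iff fun x => Qs.dist_le_two x _,
    Wdist_one_dirac_eq_iff fun x => Qs.dist_le_two x _, ← eventually_and]
  simp only [dist_corner_eq_two_and_dist_corner_neg_eq_two_iff]

lemma eq_of_Wdist_corner_eq {s : ℤˣ × ℤˣ}
    (hs : Wdist 1 μ (Measure.dirac (corner s)) = 2)
    (hneg : Wdist 1 μ (Measure.dirac (corner (-s))) = 2)
    (h : ∀ t, Wdist 1 ν (Measure.dirac (corner t)) = Wdist 1 μ (Measure.dirac (corner t))) :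
    ν = μ :=
  eq_of_Wdist_dirac_eq_of_ae_eq_or_eq
    (corner_injective.ne (signs_neg_ne_self _).symm)
    (Wdist_corner_eq_two_iff_ae_eq_or_eq.1 ⟨hs, hneg⟩)
    (Wdist_corner_eq_two_iff_ae_eq_or_eq.1 ⟨(h s).trans hs, (h (-s)).trans hneg⟩) (h _)

/-- The midpoint of the corners `s` and `t`. -/
noncomputable def cornerMidpoint (s t : ℤˣ × ℤˣ) : Qs :=
  ⟨midpoint ℝ (corner s).1 (corner t).1,
    (convex_Icc _ _).midpoint_mem (corner s).2 (corner t).2⟩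

lemma dist_cornerMidpoint_corner {s t : ℤˣ × ℤˣ} (hst : t ≠ -s) (u : ℤˣ × ℤˣ) :
    dist (cornerMidpoint s t) (corner u)
      = (dist (corner s) (corner u) + dist (corner t) (corner u)) / 2 := by
  have hfst : (cornerMidpoint s t).1.1 = ((s.1 : ℤ) + (t.1 : ℤ)) / 2 := by
    simp [cornerMidpoint, corner, midpoint_eq_smul_add, div_eq_inv_mul]
  have hsnd : (cornerMidpoint s t).1.2 = ((s.2 : ℤ) + (t.2 : ℤ)) / 2 := by
    simp [cornerMidpoint, corner, midpoint_eq_smul_add, div_eq_inv_mul]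
  simp only [dist_corner, hfst, hsnd, corner_fst, corner_snd]
  rcases s with ⟨s₁, s₂⟩
  rcases t with ⟨t₁, t₂⟩
  rcases Int.units_eq_one_or s₁, Int.units_eq_one_or s₂, Int.units_eq_one_or t₁,
    Int.units_eq_one_or t₂, Int.units_eq_one_or u.1, Int.units_eq_one_or u.2 with
    ⟨rfl | rfl, rfl | rfl, rfl | rfl, rfl | rfl, h₁ | h₁, h₂ | h₂⟩ <;>
  first
  | exact absurd rfl hst
  | norm_num [h₁, h₂]

lemma exists_ne_and_Wdist_corner_eq {a b : ℤˣ × ℤˣ} (hne : b ≠ a) (hneg : b ≠ -a) :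
    ∃ μ ν : Measure Qs, IsProbabilityMeasure μ ∧ IsProbabilityMeasure ν ∧ ν ≠ μ ∧
      Wdist 1 μ (Measure.dirac (corner a)) = 2 ∧ Wdist 1 μ (Measure.dirac (corner b)) = 2 ∧
      ∀ t, Wdist 1 ν (Measure.dirac (corner t)) = Wdist 1 μ (Measure.dirac (corner t)) := by
  have hneg' : -b ≠ a := fun h => hneg (by rw [← h, neg_neg])
  let m := cornerMidpoint (-a) (-b)
  refine ⟨pairMean (corner (-a)) (corner (-b)), .dirac m, inferInstance, inferInstance,
    fun h => ?_, ?_, ?_, fun t => ?_⟩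
  · have hW : Wdist 1 (pairMean (corner (-a)) (corner (-b))) (Measure.dirac m) = 0 := by
      rw [← h, Wdist_one_dirac_dirac, dist_self]
    rw [Wdist_one_pairMean_dirac] at hW
    obtain ⟨ha, hb⟩ := (add_eq_zero_iff_of_nonneg dist_nonneg dist_nonneg).1
      ((div_eq_zero_iff.1 hW).resolve_right two_ne_zero)
    exact hne (neg_injective (corner_injective (by rw [dist_eq_zero.1 ha, dist_eq_zero.1 hb])))
  · rw [Wdist_one_pairMean_dirac, dist_corner_corner_of_ne (signs_neg_ne_self a),
      dist_corner_corner_of_ne hneg']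
    norm_num
  · rw [Wdist_one_pairMean_dirac, dist_corner_corner_of_ne hneg.symm,
      dist_corner_corner_of_ne (signs_neg_ne_self b)]
    norm_num
  · rw [Wdist_one_pairMean_dirac, Wdist_one_dirac_dirac,
      dist_cornerMidpoint_corner (neg_injective.ne hneg)]

end CornerDistances

section Isometries

/-- The isometry of `Q` multiplying the coordinates by the signs `t`. -/
def signIsometry (t : ℤˣ × ℤˣ) : Qs ≃ᵢ Qs :=
  let f : Qs → Qs := fun x => ⟨((t.1 : ℤ) * x.1.1, (t.2 : ℤ) * x.1.2), by
    simpa only [mem_Qs_iff, abs_mul, abs_cast_unit, one_mul] using mem_Qs_iff.1 x.2⟩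
  .mk' f f
    (fun x => by
      have hsq (u : ℤˣ) (a : ℝ) : (u : ℤ) * ((u : ℤ) * a) = a := by
        rcases Int.units_eq_one_or u with rfl | rfl <;> simp
      exact Subtype.ext (Prod.ext (hsq _ _) (hsq _ _)))
    (Isometry.of_dist_eq fun x y => by
      simp [f, Subtype.dist_eq, Prod.dist_eq, Real.dist_eq, ← mul_sub, abs_mul, abs_cast_unit])

lemma signIsometry_corner (t s : ℤˣ × ℤˣ) : signIsometry t (corner s) = corner (t * s) := by
  rw [eq_corner_iff, Prod.fst_mul, Prod.snd_mul, Units.val_mul, Units.val_mul, Int.cast_mul,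
    Int.cast_mul]
  exact ⟨rfl, rfl⟩

/-- The isometry of `Q` exchanging the coordinates. -/
def swapIsometry : Qs ≃ᵢ Qs :=
  .mk' (fun x => ⟨x.1.swap, mem_Qs_iff.2 (mem_Qs_iff.1 x.2).symm⟩)
    (fun x => ⟨x.1.swap, mem_Qs_iff.2 (mem_Qs_iff.1 x.2).symm⟩)
    (fun _ => rfl) (Isometry.of_dist_eq fun _ _ => max_comm _ _)

lemma swapIsometry_corner (s : ℤˣ × ℤˣ) : swapIsometry (corner s) = corner s.swap := rfl

lemma exists_isometryEquiv_corner {τ : Equiv.Perm (ℤˣ × ℤˣ)} (hτ : ∀ s, τ (-s) = -τ s) :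
    ∃ e : Qs ≃ᵢ Qs, ∀ s, e (corner s) = corner (τ s) := by
  obtain ⟨t, ht | ht⟩ : ∃ t, (∀ s, τ s = t * s) ∨ ∀ s, τ s = t * s.swap := by
    revert τ
    decide
  · exact ⟨signIsometry t, fun s => by rw [signIsometry_corner, ht]⟩
  · refine ⟨swapIsometry.trans (signIsometry t), fun s => ?_⟩
    rw [IsometryEquiv.trans_apply, swapIsometry_corner, signIsometry_corner, ht]

end Isometries

section WassersteinIsometry

variable {Φ : Measure Qs → Measure Qs}

lemma IsWIsometry.isProbabilityMeasure (hΦ : IsWIsometry Qs 1 Φ) (μ : Measure Qs)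
    [IsProbabilityMeasure μ] : IsProbabilityMeasure (Φ μ) :=
  (hΦ.1.mapsTo (mem_WSet_one_iff.2 ‹_›)).1

lemma IsWIsometry.Wdist_eq (hΦ : IsWIsometry Qs 1 Φ) (μ ν : Measure Qs)
    [IsProbabilityMeasure μ] [IsProbabilityMeasure ν] : Wdist 1 (Φ μ) (Φ ν) = Wdist 1 μ ν :=
  hΦ.2 μ (mem_WSet_one_iff.2 ‹_›) ν (mem_WSet_one_iff.2 ‹_›)

lemma IsWIsometry.exists_eq (hΦ : IsWIsometry Qs 1 Φ) (ν : Measure Qs) [IsProbabilityMeasure ν] :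
    ∃ μ, IsProbabilityMeasure μ ∧ Φ μ = ν := by
  obtain ⟨μ, hμ, hμν⟩ := hΦ.1.surjOn (mem_WSet_one_iff.2 ‹_›)
  exact ⟨μ, hμ.1, hμν⟩

theorem IsWIsometry.exists_perm_corner (hΦ : IsWIsometry Qs 1 Φ) :
    ∃ σ : Equiv.Perm (ℤˣ × ℤˣ),
      ∀ s, Φ (Measure.dirac (corner s)) = Measure.dirac (corner (σ s)) :=
  exists_perm_eq_dirac_corner (fun _ => hΦ.isProbabilityMeasure _) fun s t hst =>
    (hΦ.Wdist_eq _ _).trans (by rw [Wdist_one_dirac_dirac, dist_corner_corner_of_ne hst])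

theorem IsWIsometry.perm_neg (hΦ : IsWIsometry Qs 1 Φ) {σ : Equiv.Perm (ℤˣ × ℤˣ)}
    (hσ : ∀ s, Φ (Measure.dirac (corner s)) = Measure.dirac (corner (σ s))) (s : ℤˣ × ℤˣ) :
    σ (-s) = -σ s := by
  by_contra hneg
  obtain ⟨μ', ν', hμ', hν', hne, hs, hs', hμν⟩ :=
    exists_ne_and_Wdist_corner_eq (σ.injective.ne (signs_neg_ne_self s)) hneg
  obtain ⟨μ, hμ, rfl⟩ := hΦ.exists_eq μ'
  obtain ⟨ν, hν, rfl⟩ := hΦ.exists_eq ν'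
  have hdist (ρ : Measure Qs) [IsProbabilityMeasure ρ] (t) :
      Wdist 1 (Φ ρ) (Measure.dirac (corner (σ t))) = Wdist 1 ρ (Measure.dirac (corner t)) := by
    rw [← hσ, hΦ.Wdist_eq]
  rw [hdist] at hs hs'
  refine hne (congrArg Φ (eq_of_Wdist_corner_eq hs hs' fun t => ?_))
  rw [← hdist μ, ← hdist ν, hμν]

variable {μ : Measure Qs} [IsProbabilityMeasure μ] {s : ℤˣ × ℤˣ}

lemma IsWIsometry.eq_self_of_ae_eq_corner_or_eq (hΦ : IsWIsometry Qs 1 Φ)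
    (hcorner : ∀ t, Φ (Measure.dirac (corner t)) = Measure.dirac (corner t))
    (hμ : ∀ᵐ x ∂μ, x = corner s ∨ x = corner (-s)) : Φ μ = μ := by
  have := hΦ.isProbabilityMeasure μ
  obtain ⟨h, hneg⟩ := Wdist_corner_eq_two_iff_ae_eq_or_eq (s := (s.1, -s.2)).2 (by simpa using hμ)
  refine eq_of_Wdist_corner_eq h hneg fun t => ?_
  rw [← hΦ.Wdist_eq μ, hcorner]

theorem IsWIsometry.eq_self_of_ae_mem_metricSegment (hΦ : IsWIsometry Qs 1 Φ)
    (hcorner : ∀ t, Φ (Measure.dirac (corner t)) = Measure.dirac (corner t))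
    (hμ : ∀ᵐ x ∂μ, x ∈ metricSegment (corner s) (corner (-s))) : Φ μ = μ := by
  have := hΦ.isProbabilityMeasure μ
  refine eq_of_Wdist_eq_of_ae_mem_metricSegment (injOn_dist_corner s) hμ fun m _ hm => ?_
  rw [← hΦ.Wdist_eq μ m, hΦ.eq_self_of_ae_eq_corner_or_eq hcorner hm]

end WassersteinIsometry

end Square

/-- Diagonal rigidity of `𝒲₁(Q, d_m)`: every isometry, composed with the push-forward of
a suitable isometry of `Q`, fixes all measures supported on `L₊` or `L₋`. -/
theorem W1_Q_diagonally_rigid (Φ : Measure ↥Qs → Measure ↥Qs)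
    (hΦ : IsWIsometry ↥Qs 1 Φ) :
    ∃ T : ↥Qs → ↥Qs, IsIsom T ∧ ∀ μ ∈ WSet ↥Qs 1,
      (msupport μ ⊆ LplusQ ∨ msupport μ ⊆ LminusQ) → Φ (μ.map T) = μ := by
  obtain ⟨σ, hσ⟩ := hΦ.exists_perm_corner
  obtain ⟨e, he⟩ := exists_isometryEquiv_corner (τ := σ⁻¹) fun s =>
    σ.injective (by simp [hΦ.perm_neg hσ])
  have hΨ : IsWIsometry Qs 1 fun μ => Φ (μ.map e) := hΦ.comp (isWIsometry_map 1 e)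
  have hcorner (s : ℤˣ × ℤˣ) :
      Φ ((Measure.dirac (corner s)).map e) = Measure.dirac (corner s) := by
    simp [Measure.map_dirac' e.continuous.measurable, he, hσ]
  refine ⟨e, ⟨e.bijective, e.dist_eq⟩, fun μ hμ hsupport => ?_⟩
  have := hμ.1
  rcases hsupport with h | h
  · refine hΨ.eq_self_of_ae_mem_metricSegment (s := (1, 1)) hcorner ?_
    filter_upwards [ae_mem_msupport μ] with x hx
    have hx' : x.1.2 = x.1.1 := h hx
    rw [mem_metricSegment_corner_neg_iff, hx']
  · refine hΨ.eq_self_of_ae_mem_metricSegment (s := (1, -1)) hcorner ?_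
    filter_upwards [ae_mem_msupport μ] with x hx
    have hx' : x.1.2 = -x.1.1 := h hx
    rw [mem_metricSegment_corner_neg_iff, hx']
    simp
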